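/- Let U and V be unitaries on the n-qubit Hilbert space (ℂ²)^{⊗n} and let i ∈ {1,…,n}. Then on the doubled system, ‖(V ⊗ I) S_i (V† ⊗ I) − (U† ⊗ I) S_i (U ⊗ I)‖∞ ≤ (1/2) Σ_{P∈{X,Y,Z}} ‖P_i − V† U† P_i U V‖∞, where V ⊗ I and U ⊗ I act with V (resp. U) on the first register. -/

import Mathlib

/-!
The swap of two qubits is half the sum of `P ⊗ P` over `P ∈ {I, X, Y, Z}`, hence
`Sᵢ = (1/2) ∑ Pᵢ ⊗ Pᵢ` (`qubitSwap_eq`). Conjugating by operators on the first register gives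
`(V⊗I) Sᵢ (V†⊗I) − (U†⊗I) Sᵢ (U⊗I) = (1/2) ∑ (V Pᵢ V† − U† Pᵢ U) ⊗ Pᵢ`, where the `P = I` term
vanishes by unitarity. Since `V Pᵢ V† − U† Pᵢ U = V (Pᵢ − V† U† Pᵢ U V) V†`, the triangle
inequality and two facts on the operator norm finish the proof: it is invariant under
multiplication by unitaries, and `A ↦ A ⊗ I` is contractive, being a star homomorphism of
C⋆-algebras.
-/


open Matrix
open Kronecker

noncomputable section

/-- Operators on the `n`-qubit Hilbert space `(ℂ²)^{⊗n}`, as matrices indexed by bitstrings. -/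
abbrev QOp (n : ℕ) := Matrix (Fin n → Fin 2) (Fin n → Fin 2) ℂ

/-- Operators on the doubled system `((ℂ²)^{⊗n}) ⊗ ((ℂ²)^{⊗n})` of two `n`-qubit registers. -/
abbrev DOp (n : ℕ) :=
  Matrix ((Fin n → Fin 2) × (Fin n → Fin 2)) ((Fin n → Fin 2) × (Fin n → Fin 2)) ℂ

/-- The single-qubit Pauli `X` matrix. -/
def X2 : Matrix (Fin 2) (Fin 2) ℂ := !![0, 1; 1, 0]

/-- The single-qubit Pauli `Y` matrix. -/
def Y2 : Matrix (Fin 2) (Fin 2) ℂ := !![0, -Complex.I; Complex.I, 0]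

/-- The single-qubit Pauli `Z` matrix. -/
def Z2 : Matrix (Fin 2) (Fin 2) ℂ := !![1, 0; 0, -1]

/-- The three Pauli matrices `X, Y, Z`. -/
def pauli : Fin 3 → Matrix (Fin 2) (Fin 2) ℂ := ![X2, Y2, Z2]

/-- The `n`-qubit operator acting as the single-qubit operator `M` on qubit `i`
and as the identity on all other qubits. -/
def localOp {n : ℕ} (M : Matrix (Fin 2) (Fin 2) ℂ) (i : Fin n) : QOp n :=
  Matrix.of fun a b => ∏ j, if j = i then M (a j) (b j) else (if a j = b j then 1 else 0)

/-- The global swap unitary `S` on the doubled system, mapping `|a⟩⊗|b⟩` to `|b⟩⊗|a⟩`. -/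
def regSwap (n : ℕ) : DOp n :=
  Matrix.of fun p q => if p.1 = q.2 ∧ p.2 = q.1 then 1 else 0

/-- The unitary `Sᵢ` swapping qubit `i` of the first register with qubit `i` of the
second register of the doubled system. -/
def qubitSwap (n : ℕ) (i : Fin n) : DOp n :=
  Matrix.of fun p q =>
    if p.1 = Function.update q.1 i (q.2 i) ∧ p.2 = Function.update q.2 i (q.1 i) then 1 else 0

/-- The operator norm (largest singular value) `‖·‖∞` of a square complex matrix,
via its action on Euclidean space. -/
def opNorm {m : Type*} [Fintype m] [DecidableEq m] (A : Matrix m m ℂ) : ℝ :=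
  ‖Matrix.toEuclideanCLM (𝕜 := ℂ) A‖

section Norms

open scoped Matrix.Norms.L2Operator

/-- The ampliation `A ↦ A ⊗ I` as a star homomorphism of matrix algebras. -/
def ampl (n : ℕ) : QOp n →⋆ₙₐ[ℂ] DOp n where
  toFun A := A ⊗ₖ (1 : QOp n)
  map_smul' c A := by simp [smul_kronecker]
  map_zero' := by simp
  map_add' A B := by simp [add_kronecker]
  map_mul' A B := by simp [← mul_kronecker_mul]
  map_star' A := by simp [star_eq_conjTranspose, conjTranspose_kronecker]

lemma opNorm_kronecker_le {n : ℕ} (A Q : QOp n)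
    (hQ : Q ∈ Matrix.unitaryGroup (Fin n → Fin 2) ℂ) :
    opNorm (A ⊗ₖ Q) ≤ opNorm A := by
  have h1 : A ⊗ₖ Q = (A ⊗ₖ (1 : QOp n)) * ((1 : QOp n) ⊗ₖ Q) := by
    simp [← mul_kronecker_mul]
  have h2 : (1 : QOp n) ⊗ₖ Q ∈ unitary (DOp n) := kronecker_mem_unitary (one_mem _) hQ
  have h3 : ‖A ⊗ₖ Q‖ ≤ ‖A‖ := by
    rw [h1, CStarRing.norm_mul_mem_unitary _ h2]
    exact NonUnitalStarAlgHom.norm_apply_le (ampl n) A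
  exact h3

lemma opNorm_conj {n : ℕ} (A V : QOp n)
    (hV : V ∈ Matrix.unitaryGroup (Fin n → Fin 2) ℂ) :
    opNorm (V * A * Vᴴ) = opNorm A := by
  have h : ‖V * A * Vᴴ‖ = ‖A‖ := by
    rw [← star_eq_conjTranspose, CStarRing.norm_mul_mem_unitary _ (Unitary.star_mem hV),
      CStarRing.norm_mem_unitary_mul _ hV]
  exact h

lemma opNorm_half_sum_le {n : ℕ} (F : Fin 3 → DOp n) :
    opNorm ((1 / 2 : ℂ) • ∑ p, F p) ≤ (1 / 2) * ∑ p, opNorm (F p) := by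
  have h : ‖(1 / 2 : ℂ) • ∑ p, F p‖ ≤ (1 / 2) * ∑ p, ‖F p‖ := by
    rw [norm_smul]
    have : ‖(1 / 2 : ℂ)‖ = 1 / 2 := by norm_num
    rw [this]
    gcongr
    exact norm_sum_le _ _
  exact h

end Norms

lemma localOp_apply {n : ℕ} (M : Matrix (Fin 2) (Fin 2) ℂ) (i : Fin n) (a b : Fin n → Fin 2) :
    localOp M i a b = if ∀ j, j ≠ i → a j = b j then M (a i) (b i) else 0 := by
  simp only [localOp, of_apply]
  split_ifs with h
  · rw [Finset.prod_eq_single i]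
    · simp
    · intro j _ hj
      simp [hj, h j hj]
    · simp
  · push Not at h
    obtain ⟨j, hj, hab⟩ := h
    exact Finset.prod_eq_zero (Finset.mem_univ j) (by simp [hj, hab])

lemma localOp_one {n : ℕ} (i : Fin n) : localOp 1 i = (1 : QOp n) := by
  ext a b
  rw [localOp_apply, one_apply, one_apply, ← ite_and]
  congr 1
  rw [eq_iff_iff, funext_iff]
  constructor
  · rintro ⟨h, hi⟩ j
    by_cases hj : j = i
    · rw [hj, hi]
    · exact h j hj
  · exact fun h => ⟨fun j _ => h j, h i⟩

lemma localOp_mul {n : ℕ} (M N : Matrix (Fin 2) (Fin 2) ℂ) (i : Fin n) :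
    localOp M i * localOp N i = localOp (M * N) i := by
  ext a b
  simp only [mul_apply, localOp, of_apply, ← Finset.prod_mul_distrib]
  -- Distributivity turns the sum over bitstrings of products into a product of one-qubit sums.
  have h := Finset.prod_univ_sum (fun _ : Fin n => (Finset.univ : Finset (Fin 2)))
    (fun j x => (if j = i then M (a j) x else if a j = x then 1 else 0) *
      (if j = i then N x (b j) else if x = b j then 1 else 0))
  rw [Fintype.piFinset_univ] at h
  rw [← h]
  refine Finset.prod_congr rfl fun j _ => ?_
  by_cases hj : j = i <;> simp [hj]

lemma localOp_conjTranspose {n : ℕ} (M : Matrix (Fin 2) (Fin 2) ℂ) (i : Fin n) :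
    (localOp M i)ᴴ = localOp Mᴴ i := by
  ext a b
  simp only [conjTranspose_apply, localOp_apply, eq_comm, apply_ite star, star_zero]

lemma pauli_conjTranspose (p : Fin 3) : (pauli p)ᴴ = pauli p := by
  fin_cases p <;> ext a b <;> fin_cases a <;> fin_cases b <;> simp [pauli, X2, Y2, Z2]

lemma pauli_mul_self (p : Fin 3) : pauli p * pauli p = 1 := by
  fin_cases p <;> ext a b <;> fin_cases a <;> fin_cases b <;> simp [pauli, X2, Y2, Z2]

lemma localOp_pauli_mem {n : ℕ} (p : Fin 3) (i : Fin n) :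
    localOp (pauli p) i ∈ Matrix.unitaryGroup (Fin n → Fin 2) ℂ := by
  rw [mem_unitaryGroup_iff, star_eq_conjTranspose, localOp_conjTranspose, pauli_conjTranspose,
    localOp_mul, pauli_mul_self, localOp_one]

/-- The entrywise form of `SWAP = (1/2) ∑ P ⊗ P` on two qubits. -/
lemma pauli_completeness (a b c d : Fin 2) :
    (1 / 2 : ℂ) * ((1 : Matrix (Fin 2) (Fin 2) ℂ) a c * (1 : Matrix (Fin 2) (Fin 2) ℂ) b d
      + ∑ p, pauli p a c * pauli p b d) = if a = d ∧ b = c then 1 else 0 := by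
  fin_cases a <;> fin_cases b <;> fin_cases c <;> fin_cases d <;>
    simp [Fin.sum_univ_three, pauli, X2, Y2, Z2] <;> norm_num

lemma qubitSwap_eq (n : ℕ) (i : Fin n) :
    qubitSwap n i = (1 / 2 : ℂ) • ((1 : QOp n) ⊗ₖ (1 : QOp n)
      + ∑ p, localOp (pauli p) i ⊗ₖ localOp (pauli p) i) := by
  rw [← localOp_one i]
  ext ⟨a, b⟩ ⟨c, d⟩
  simp only [qubitSwap, of_apply, Matrix.smul_apply, Matrix.add_apply, Matrix.sum_apply,
    kronecker_apply,
    localOp_apply, smul_eq_mul, Function.eq_update_iff]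
  by_cases h1 : ∀ j, j ≠ i → a j = c j
  · by_cases h2 : ∀ j, j ≠ i → b j = d j
    · simp only [if_pos h1, if_pos h2, pauli_completeness]
      congr 1
      rw [eq_iff_iff]
      exact ⟨fun h => ⟨h.1.1, h.2.1⟩, fun h => ⟨⟨h.1, h1⟩, ⟨h.2, h2⟩⟩⟩
    · simp [h2]
  · simp [h1]

/-- Per-factor sewing estimate: for unitaries `U, V` on `n` qubits and a qubit `i`,
`‖(V⊗I) Sᵢ (V†⊗I) − (U†⊗I) Sᵢ (U⊗I)‖∞ ≤ (1/2) Σ_{P∈{X,Y,Z}} ‖Pᵢ − V† U† Pᵢ U V‖∞`. -/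
theorem sewing_factor_estimate (n : ℕ) (U V : QOp n)
    (hU : U ∈ Matrix.unitaryGroup (Fin n → Fin 2) ℂ)
    (hV : V ∈ Matrix.unitaryGroup (Fin n → Fin 2) ℂ) (i : Fin n) :
    opNorm ((V ⊗ₖ (1 : QOp n)) * qubitSwap n i * (Vᴴ ⊗ₖ (1 : QOp n))
        - (Uᴴ ⊗ₖ (1 : QOp n)) * qubitSwap n i * (U ⊗ₖ (1 : QOp n)))
      ≤ (1 / 2) *
          ∑ p : Fin 3, opNorm (localOp (pauli p) i - Vᴴ * Uᴴ * localOp (pauli p) i * U * V) := by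
  have hU' : Uᴴ * U = 1 := mem_unitaryGroup_iff'.mp hU
  have hV' : V * Vᴴ = 1 := mem_unitaryGroup_iff.mp hV
  have key : (V ⊗ₖ (1 : QOp n)) * qubitSwap n i * (Vᴴ ⊗ₖ (1 : QOp n))
        - (Uᴴ ⊗ₖ (1 : QOp n)) * qubitSwap n i * (U ⊗ₖ (1 : QOp n))
      = (1 / 2 : ℂ) • ∑ p : Fin 3,
        (V * localOp (pauli p) i * Vᴴ - Uᴴ * localOp (pauli p) i * U)
          ⊗ₖ localOp (pauli p) i := by
    have hsub (A B C : QOp n) : (A - B) ⊗ₖ C = A ⊗ₖ C - B ⊗ₖ C := by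
      ext
      simp [sub_mul]
    simp only [qubitSwap_eq, mul_smul_comm, smul_mul_assoc, mul_add, add_mul, Finset.mul_sum,
      Finset.sum_mul, ← mul_kronecker_mul, mul_one, one_mul, hU', hV', ← smul_sub,
      add_sub_add_left_eq_sub, ← Finset.sum_sub_distrib, hsub]
  rw [key]
  refine (opNorm_half_sum_le _).trans ?_
  gcongr with p
  refine (opNorm_kronecker_le _ _ (localOp_pauli_mem p i)).trans_eq ?_
  rw [← opNorm_conj (localOp (pauli p) i - _) V hV]
  congr 1
  calc V * localOp (pauli p) i * Vᴴ - Uᴴ * localOp (pauli p) i * U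
      = V * localOp (pauli p) i * Vᴴ
        - (V * Vᴴ) * (Uᴴ * localOp (pauli p) i * U) * (V * Vᴴ) := by simp [hV']
    _ = V * (localOp (pauli p) i - Vᴴ * Uᴴ * localOp (pauli p) i * U * V) * Vᴴ := by
      noncomm_ring
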